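/- Fix an integer q ≥ 2 and an integer d ≥ 2q. Let A = 1_q 1_q^T − (1−β) I_q be the antiferromagnetic Potts interaction matrix with max{0, 1 − q/(d+1)} ≤ β ≤ 1. Let 0 < ε ≤ 1/4 and set γ* := min{ 1 − √β + ε, 1/10 }. If μ is any probability distribution on [q]^d satisfying, for every color c ∈ [q], the lower tail bound Pr_{τ∼μ}[ #{i ∈ [d] : τ(i) = c} ≤ γ* · d/q ] ≤ ε, then there exists a product probability measure ν on [q]^d such that F_{A,d}(μ) = F_{A,d}(ν). -/

import Mathlib

open scoped BigOperators Classical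
open MeasureTheory

/-- A probability distribution on a finite type, represented as a nonnegative
function summing to one. -/
def IsProbDist {ι : Type*} [Fintype ι] (μ : ι → ℝ) : Prop :=
  (∀ x, 0 ≤ μ x) ∧ ∑ x, μ x = 1

/-- The unnormalized belief propagation functional `G_c(μ) = E_{τ∼μ}[∏ i, A c (τ i)]`. -/
noncomputable def Gfun {q d : ℕ} (A : Matrix (Fin q) (Fin q) ℝ)
    (μ : (Fin d → Fin q) → ℝ) (c : Fin q) : ℝ :=
  ∑ σ : Fin d → Fin q, μ σ * ∏ i, A c (σ i)

/-- The belief propagation functional `F_{A,d,c}(μ) = G_c(μ) / ∑ b, G_b(μ)`. -/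
noncomputable def Ffun {q d : ℕ} (A : Matrix (Fin q) (Fin q) ℝ)
    (μ : (Fin d → Fin q) → ℝ) (c : Fin q) : ℝ :=
  Gfun A μ c / ∑ b, Gfun A μ b

/-- The product measure on `[k]^d` with marginals `ν i`. -/
noncomputable def prodMeasure {d k : ℕ} (ν : Fin d → Fin k → ℝ) :
    (Fin d → Fin k) → ℝ :=
  fun σ => ∏ i, ν i (σ i)

/-- The point mass `δ_b` at a spin `b`. -/
noncomputable def pointMass {k : ℕ} (b : Fin k) : Fin k → ℝ :=
  fun c => if c = b then 1 else 0

/-- The marginal of a distribution `μ` on `[k]^d` at coordinate `i`. -/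
noncomputable def marg {d k : ℕ} (μ : (Fin d → Fin k) → ℝ) (i : Fin d) : Fin k → ℝ :=
  fun b => ∑ σ : Fin d → Fin k, if σ i = b then μ σ else 0

/-- The tilt `λ ⋆ μ` of a distribution `μ` on `[k]^d` by an external field `λ`. -/
noncomputable def tilt {d k : ℕ} (lam : Fin d → Fin k → ℝ)
    (μ : (Fin d → Fin k) → ℝ) : (Fin d → Fin k) → ℝ :=
  fun σ => (μ σ * ∏ i, lam i (σ i)) / ∑ σ' : Fin d → Fin k, μ σ' * ∏ i, lam i (σ' i)

/-- The `(q+1) × (q+1)` interaction matrix `B(β,A) = [[β, 1ᵀ],[1, A]]`; the index `0`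
plays the role of the special spin `c*`. -/
noncomputable def Bmat {q : ℕ} (β : ℝ) (A : Matrix (Fin q) (Fin q) ℝ) :
    Matrix (Fin (q+1)) (Fin (q+1)) ℝ :=
  Matrix.of fun i j =>
    if hi : i = 0 then (if j = 0 then β else 1)
    else if hj : j = 0 then 1 else A (i.pred hi) (j.pred hj)

/-- `𝓜(d,A) = argmax_{b} ∑ c, A c b ^ d`. -/
def Mset {q : ℕ} (d : ℕ) (A : Matrix (Fin q) (Fin q) ℝ) : Set (Fin q) :=
  {b | ∀ b', ∑ c, A c b' ^ d ≤ ∑ c, A c b ^ d}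

/-- `max_{b ∈ [q]} ∑ c, A c b ^ d` (as a supremum over the finite nonempty type `Fin q`). -/
noncomputable def maxCol {q : ℕ} (d : ℕ) (A : Matrix (Fin q) (Fin q) ℝ) : ℝ :=
  ⨆ b, ∑ c, A c b ^ d

/-- The antiferromagnetic Potts interaction matrix `A = 1 1ᵀ - (1-β) I`:
diagonal entries `β`, off-diagonal entries `1`. -/
noncomputable def pottsA (q : ℕ) (β : ℝ) : Matrix (Fin q) (Fin q) ℝ :=
  Matrix.of fun c b => if c = b then β else 1

/-!
Write `G_c` for the unnormalized functional of `μ` and `x = 1 - β`. A product measure `p^{⊗d}` has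
functional `(1 - x p_c)^d`, so it matches `μ` as soon as `1 - x p_c = t G_c^{1/d}` for a scalar `t`.
Summing over `c` forces `t = (q - x) / ∑ b, G_b^{1/d}`, and the resulting `p` is nonnegative exactly
when `(q - x) G_c^{1/d} ≤ ∑ b, G_b^{1/d}` for every `c`.

This inequality comes from two estimates. Since at most a quarter of the mass of `μ` avoids the
color `c`, we have `G_c ≤ 1 - 3x/4`. By Jensen, `G_b ≥ β^{M_b}` with `M_b` the expected number of
coordinates of color `b`, and as `∑ b, M_b = d`, a second application of Jensen bounds the sum over
`b ≠ c` below by `(q - 1) β^{1/(q-1)}`. It remains to compare `(q - 1 - x) (1 - 3x/4)^{1/d}` with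
`(q - 1) (1 - x)^{1/(q-1)}`, which a Taylor expansion of the logarithm settles when `x ≤ 1/2` and
`x (d + 1) ≤ q`.
-/

section Analysis

theorem sum_range_pow_div_le_neg_log_one_sub {x : ℝ} (hx0 : 0 ≤ x) (hx1 : x < 1) (n : ℕ) :
    ∑ i ∈ Finset.range n, x ^ (i + 1) / (i + 1) ≤ -Real.log (1 - x) :=
  sum_le_hasSum _ (fun i _ => by positivity)
    (Real.hasSum_pow_div_log_of_abs_lt_one (by rwa [abs_of_nonneg hx0]))

theorem neg_log_one_sub_le_sum_range_add {x : ℝ} (hx0 : 0 ≤ x) (hx1 : x < 1) (n : ℕ) :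
    -Real.log (1 - x) ≤
      ∑ i ∈ Finset.range n, x ^ (i + 1) / (i + 1) + x ^ (n + 1) / (n + 1) * (1 - x)⁻¹ := by
  have tail : HasSum (fun i : ℕ => x ^ (i + n + 1) / ((i + n : ℕ) + 1 : ℝ))
      (-Real.log (1 - x) - ∑ i ∈ Finset.range n, x ^ (i + 1) / ((i : ℝ) + 1)) :=
    (hasSum_nat_add_iff' n).2
      (Real.hasSum_pow_div_log_of_abs_lt_one (by rwa [abs_of_nonneg hx0]))
  have geometric := (hasSum_geometric_of_lt_one hx0 hx1).mul_left (x ^ (n + 1) / ((n : ℝ) + 1))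
  have tail_le := hasSum_le (fun i => ?_) tail geometric
  · linarith
  · calc x ^ (i + n + 1) / ((i + n : ℕ) + 1 : ℝ)
        ≤ x ^ (i + n + 1) / ((n : ℝ) + 1) := by gcongr; lia
      _ = x ^ (n + 1) / ((n : ℝ) + 1) * x ^ i := by ring

theorem neg_log_taylor_comparison {n x : ℝ} (hn : 0 < n) (hx : x ≤ 1 / 2) :
    (x + x ^ 2 / 2 + 2 / 3 * x ^ 3) / n ≤
      x / n + (x / n) ^ 2 / 2 + (3 / 4 * x + (3 / 4 * x) ^ 2 / 2) * (x / (n + 1)) := by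
  have difference_eq :
      x / n + (x / n) ^ 2 / 2 + (3 / 4 * x + (3 / 4 * x) ^ 2 / 2) * (x / (n + 1)) -
          (x + x ^ 2 / 2 + 2 / 3 * x ^ 3) / n =
        x ^ 2 / (n ^ 2 * (n + 1)) *
          ((1 / 2 - x) * (37 / 96 * n ^ 2 + 2 / 3 * n) + (11 / 192 * n ^ 2 - n / 3 + 1 / 2)) := by
    field_simp
    ring
  have linear_nonneg : 0 ≤ (1 / 2 - x) * (37 / 96 * n ^ 2 + 2 / 3 * n) :=
    mul_nonneg (by linarith) (by positivity)
  have quadratic_nonneg : 0 ≤ 11 / 192 * n ^ 2 - n / 3 + 1 / 2 := by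
    nlinarith [sq_nonneg (n - 32 / 11)]
  rw [← sub_nonneg, difference_eq]
  exact mul_nonneg (by positivity) (add_nonneg linear_nonneg quadratic_nonneg)

theorem log_one_sub_div_add_log_div_le {n d x g : ℝ} (hn : 1 ≤ n) (hd : 0 < d) (hx0 : 0 ≤ x)
    (hx : x ≤ 1 / 2) (hxd : x * (d + 1) ≤ n + 1) (hg0 : 0 < g) (hg : g ≤ 1 - 3 / 4 * x) :
    Real.log (1 - x / n) + Real.log g / d ≤ Real.log (1 - x) / n := by
  have hxn : x / n ≤ x := div_le_self hx0 hn
  have log_one_sub_le {y : ℝ} (hy0 : 0 ≤ y) (hy1 : y < 1) :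
      Real.log (1 - y) ≤ -(y + y ^ 2 / 2) := by
    have h := sum_range_pow_div_le_neg_log_one_sub hy0 hy1 2
    norm_num [Finset.sum_range_succ] at h
    linarith
  have le_log_one_sub : -(x + x ^ 2 / 2 + 2 / 3 * x ^ 3) ≤ Real.log (1 - x) := by
    have h := neg_log_one_sub_le_sum_range_add hx0 (by linarith) 2
    norm_num [Finset.sum_range_succ] at h
    have inv_le : (1 - x)⁻¹ ≤ 2 := inv_le_of_inv_le₀ two_pos (by linarith)
    have remainder_le : x ^ 3 / 3 * (1 - x)⁻¹ ≤ x ^ 3 / 3 * 2 := by gcongr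
    linarith
  have log_g_le : Real.log g ≤ -(3 / 4 * x + (3 / 4 * x) ^ 2 / 2) :=
    (Real.log_le_log hg0 hg).trans (log_one_sub_le (by positivity) (by linarith))
  have inv_d_ge : x / (n + 1) ≤ 1 / d := by
    rw [div_le_div_iff₀ (by linarith) hd]
    linarith
  calc Real.log (1 - x / n) + Real.log g / d
      = Real.log (1 - x / n) - -Real.log g * (1 / d) := by ring
    _ ≤ -(x / n + (x / n) ^ 2 / 2) -
          (3 / 4 * x + (3 / 4 * x) ^ 2 / 2) * (x / (n + 1)) := by
        gcongr
        · exact log_one_sub_le (by positivity) (by linarith)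
        · exact neg_nonneg.2 (Real.log_nonpos hg0.le (by linarith))
        · exact le_neg_of_le_neg log_g_le
    _ ≤ -((x + x ^ 2 / 2 + 2 / 3 * x ^ 3) / n) := by
        linarith [neg_log_taylor_comparison (zero_lt_one.trans_le hn) hx]
    _ ≤ Real.log (1 - x) / n := by
        rw [← neg_div]
        gcongr

theorem sub_mul_rpow_inv_le_mul_one_sub_rpow_inv {n d x g : ℝ} (hn : 1 ≤ n) (hd : 0 < d)
    (hx0 : 0 ≤ x) (hx : x ≤ 1 / 2) (hxd : x * (d + 1) ≤ n + 1) (hg0 : 0 < g)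
    (hg : g ≤ 1 - 3 / 4 * x) :
    (n - x) * g ^ d⁻¹ ≤ n * (1 - x) ^ n⁻¹ := by
  have hxn : x / n ≤ x := div_le_self hx0 hn
  calc (n - x) * g ^ d⁻¹
      = n * Real.exp (Real.log (1 - x / n) + Real.log g / d) := by
        rw [Real.exp_add, Real.exp_log (by linarith), Real.rpow_def_of_pos hg0, ← div_eq_mul_inv]
        field_simp
    _ ≤ n * Real.exp (Real.log (1 - x) / n) := by
        gcongr
        exact log_one_sub_div_add_log_div_le hn hd hx0 hx hxd hg0 hg
    _ = n * (1 - x) ^ n⁻¹ := by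
        rw [Real.rpow_def_of_pos (by linarith), ← div_eq_mul_inv]

theorem card_mul_rpow_div_card_le_sum_rpow {ι : Type*} {s : Finset ι} (hs : s.Nonempty)
    {b T : ℝ} (hb0 : 0 < b) (hb1 : b ≤ 1) {y : ι → ℝ} (hT : ∑ i ∈ s, y i ≤ T) :
    (s.card : ℝ) * b ^ (T / s.card) ≤ ∑ i ∈ s, b ^ y i := by
  have card_pos : (0 : ℝ) < s.card := by exact_mod_cast hs.card_pos
  have jensen : b ^ (∑ i ∈ s, (s.card : ℝ)⁻¹ * y i) ≤ ∑ i ∈ s, (s.card : ℝ)⁻¹ * b ^ y i :=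
    (convexOn_rpow_left hb0).map_sum_le (fun _ _ => by positivity) (by simp [card_pos.ne'])
      fun _ _ => Set.mem_univ _
  rw [← Finset.mul_sum, ← Finset.mul_sum, le_inv_mul_iff₀ card_pos] at jensen
  refine le_trans ?_ jensen
  gcongr ?_ * ?_
  rw [div_eq_inv_mul]
  exact Real.rpow_le_rpow_of_exponent_ge hb0 hb1 (by gcongr)

end Analysis

section Potts

variable {q d : ℕ} {β : ℝ} {μ : (Fin d → Fin q) → ℝ}

/-- The number of coordinates of the configuration `σ` that carry the color `c`. -/
def colorCount (σ : Fin d → Fin q) (c : Fin q) : ℕ :=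
  (Finset.univ.filter (fun i => σ i = c)).card

/-- The expected number of coordinates of color `c` in a configuration drawn from `μ`. -/
noncomputable def meanColorCount (μ : (Fin d → Fin q) → ℝ) (c : Fin q) : ℝ :=
  ∑ σ, μ σ * colorCount σ c

/-- The probability that the color `c` does not occur in a configuration drawn from `μ`. -/
noncomputable def absenceProb (μ : (Fin d → Fin q) → ℝ) (c : Fin q) : ℝ :=
  ∑ σ, if colorCount σ c = 0 then μ σ else 0

theorem sum_colorCount (σ : Fin d → Fin q) : ∑ c, colorCount σ c = d := by
  simpa [colorCount] using
    (Finset.card_eq_sum_card_fiberwise (f := σ) (s := Finset.univ) (t := Finset.univ)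
      (by simp)).symm

theorem sum_meanColorCount (hμ : IsProbDist μ) : ∑ c, meanColorCount μ c = d := by
  simp only [meanColorCount]
  rw [Finset.sum_comm]
  simp only [← Finset.mul_sum, ← Nat.cast_sum, sum_colorCount, ← Finset.sum_mul, hμ.2, one_mul]

theorem meanColorCount_nonneg (hμ : ∀ σ, 0 ≤ μ σ) (c : Fin q) : 0 ≤ meanColorCount μ c :=
  Finset.sum_nonneg fun σ _ => mul_nonneg (hμ σ) (Nat.cast_nonneg _)

theorem absenceProb_le_sum_ite_colorCount_le (hμ : ∀ σ, 0 ≤ μ σ) {t : ℝ} (ht : 0 ≤ t)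
    (c : Fin q) :
    absenceProb μ c ≤ ∑ σ, if (colorCount σ c : ℝ) ≤ t then μ σ else 0 := by
  refine Finset.sum_le_sum fun σ _ => ?_
  by_cases absent : colorCount σ c = 0
  · simp [absent, ht]
  · rw [if_neg absent]
    split_ifs
    exacts [hμ σ, le_rfl]

theorem prod_pottsA (β : ℝ) (c : Fin q) (σ : Fin d → Fin q) :
    ∏ i, pottsA q β c (σ i) = β ^ colorCount σ c := by
  simp [pottsA, colorCount, Finset.prod_ite, eq_comm]

theorem Gfun_pottsA (β : ℝ) (μ : (Fin d → Fin q) → ℝ) (c : Fin q) :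
    Gfun (pottsA q β) μ c = ∑ σ, μ σ * β ^ colorCount σ c := by
  simp only [Gfun, prod_pottsA]

theorem Gfun_prodMeasure (A : Matrix (Fin q) (Fin q) ℝ) (ν : Fin d → Fin q → ℝ) (c : Fin q) :
    Gfun A (prodMeasure ν) c = ∏ i, ∑ b, ν i b * A c b := by
  rw [Finset.prod_univ_sum]
  simp [Gfun, prodMeasure, Finset.prod_mul_distrib]

theorem sum_mul_pottsA {p : Fin q → ℝ} (hp : ∑ b, p b = 1) (β : ℝ) (c : Fin q) :
    ∑ b, p b * pottsA q β c b = 1 - (1 - β) * p c := by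
  have summand_eq (b : Fin q) :
      p b * pottsA q β c b = p b - if c = b then (1 - β) * p b else 0 := by
    simp only [pottsA, Matrix.of_apply]
    split_ifs <;> ring
  simp [summand_eq, hp]

theorem Gfun_pottsA_prodMeasure_const {p : Fin q → ℝ} (hp : ∑ b, p b = 1) (β : ℝ) (c : Fin q) :
    Gfun (pottsA q β) (prodMeasure fun _ : Fin d => p) c = (1 - (1 - β) * p c) ^ d := by
  simp [Gfun_prodMeasure, sum_mul_pottsA hp]

theorem Ffun_eq_of_Gfun_eq_mul {d' : ℕ} {A : Matrix (Fin q) (Fin q) ℝ}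
    {ν : (Fin d' → Fin q) → ℝ} {t : ℝ} (ht : t ≠ 0)
    (h : ∀ c, Gfun A ν c = t * Gfun A μ c) (c : Fin q) : Ffun A μ c = Ffun A ν c := by
  simp only [Ffun, h, ← Finset.mul_sum, mul_div_mul_left _ _ ht]

theorem rpow_meanColorCount_le_Gfun_pottsA (hβ : 0 < β) (hμ : IsProbDist μ) (c : Fin q) :
    β ^ meanColorCount μ c ≤ Gfun (pottsA q β) μ c := by
  have jensen : β ^ meanColorCount μ c ≤ ∑ σ, μ σ * β ^ (colorCount σ c : ℝ) :=
    (convexOn_rpow_left hβ).map_sum_le (fun σ _ => hμ.1 σ) hμ.2 fun _ _ => Set.mem_univ _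
  simpa only [Gfun_pottsA, Real.rpow_natCast] using jensen

theorem Gfun_pottsA_pos (hβ : 0 < β) (hμ : IsProbDist μ) (c : Fin q) :
    0 < Gfun (pottsA q β) μ c :=
  (Real.rpow_pos_of_pos hβ _).trans_le (rpow_meanColorCount_le_Gfun_pottsA hβ hμ c)

theorem Gfun_pottsA_le (hβ0 : 0 ≤ β) (hβ1 : β ≤ 1) (hμ : IsProbDist μ) (c : Fin q) :
    Gfun (pottsA q β) μ c ≤ β + (1 - β) * absenceProb μ c := by
  have summand_le (σ : Fin d → Fin q) :
      μ σ * β ^ colorCount σ c ≤ μ σ * β + (1 - β) * if colorCount σ c = 0 then μ σ else 0 := by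
    split_ifs with absent
    · rw [absent]
      linarith
    · rw [mul_zero, add_zero]
      exact mul_le_mul_of_nonneg_left (pow_le_of_le_one hβ0 hβ1 absent) (hμ.1 σ)
  calc Gfun (pottsA q β) μ c
      = ∑ σ, μ σ * β ^ colorCount σ c := Gfun_pottsA β μ c
    _ ≤ ∑ σ, (μ σ * β + (1 - β) * if colorCount σ c = 0 then μ σ else 0) :=
        Finset.sum_le_sum fun σ _ => summand_le σ
    _ = β + (1 - β) * absenceProb μ c := by
        rw [Finset.sum_add_distrib, ← Finset.sum_mul, hμ.2, one_mul, ← Finset.mul_sum, absenceProb]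

theorem mul_rpow_inv_le_sum_erase_Gfun_rpow_inv (hq : 2 ≤ q) (hβ0 : 0 < β) (hβ1 : β ≤ 1)
    (hμ : IsProbDist μ) (c : Fin q) :
    ((q : ℝ) - 1) * β ^ ((q : ℝ) - 1)⁻¹ ≤
      ∑ b ∈ Finset.univ.erase c, Gfun (pottsA q β) μ b ^ (d : ℝ)⁻¹ := by
  have card_erase : (Finset.univ.erase c).card = q - 1 := by simp
  have card_erase_real : ((Finset.univ.erase c).card : ℝ) = q - 1 := by
    rw [card_erase, Nat.cast_sub (by lia), Nat.cast_one]
  have sum_erase_le : ∑ b ∈ Finset.univ.erase c, meanColorCount μ b * (d : ℝ)⁻¹ ≤ 1 := by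
    rw [← Finset.sum_mul, ← div_eq_mul_inv]
    refine div_le_one_of_le₀ ?_ d.cast_nonneg
    rw [← sum_meanColorCount hμ]
    exact Finset.sum_le_univ_sum_of_nonneg (meanColorCount_nonneg hμ.1)
  have jensen := card_mul_rpow_div_card_le_sum_rpow
    (Finset.card_pos.1 (by lia)) hβ0 hβ1 sum_erase_le
  rw [card_erase_real, one_div] at jensen
  refine jensen.trans (Finset.sum_le_sum fun b _ => ?_)
  rw [Real.rpow_mul hβ0.le]
  gcongr
  exact rpow_meanColorCount_le_Gfun_pottsA hβ0 hμ b

theorem sub_mul_Gfun_rpow_inv_le_sum (hq : 2 ≤ q) (hd : d ≠ 0) (hβ : 1 / 2 ≤ β) (hβ1 : β ≤ 1)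
    (hβd : 1 - (q : ℝ) / (d + 1) ≤ β) (hμ : IsProbDist μ) {c : Fin q}
    (habs : absenceProb μ c ≤ 1 / 4) :
    (q - (1 - β)) * Gfun (pottsA q β) μ c ^ (d : ℝ)⁻¹ ≤
      ∑ b, Gfun (pottsA q β) μ b ^ (d : ℝ)⁻¹ := by
  have hβ0 : 0 < β := by linarith
  have hq' : (2 : ℝ) ≤ q := by exact_mod_cast hq
  have hd' : (0 : ℝ) < d := by positivity
  have degree_bound : (1 - β) * (d + 1) ≤ (q - 1 : ℝ) + 1 := by
    rw [sub_add_cancel, ← le_div_iff₀ (by positivity)]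
    linarith
  have G_le : Gfun (pottsA q β) μ c ≤ 1 - 3 / 4 * (1 - β) :=
    calc Gfun (pottsA q β) μ c
        ≤ β + (1 - β) * absenceProb μ c := Gfun_pottsA_le hβ0.le hβ1 hμ c
      _ ≤ β + (1 - β) * (1 / 4) := by gcongr
      _ = 1 - 3 / 4 * (1 - β) := by ring
  have one_color_le := sub_mul_rpow_inv_le_mul_one_sub_rpow_inv (by linarith) hd' (by linarith)
    (by linarith) degree_bound (Gfun_pottsA_pos hβ0 hμ c) G_le
  rw [sub_sub_cancel] at one_color_le
  have others_ge := mul_rpow_inv_le_sum_erase_Gfun_rpow_inv hq hβ0 hβ1 hμ c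
  rw [← Finset.add_sum_erase _ _ (Finset.mem_univ c)]
  linarith

theorem exists_isProbDist_one_sub_mul_eq_mul {x : ℝ} (hx : 0 < x) (hxq : x < q) {w : Fin q → ℝ}
    (hw : 0 < ∑ b, w b) (hle : ∀ c, (q - x) * w c ≤ ∑ b, w b) :
    ∃ p : Fin q → ℝ, IsProbDist p ∧ ∃ t > 0, ∀ c, 1 - x * p c = t * w c := by
  set t := (q - x) / ∑ b, w b
  refine ⟨fun c => (1 - t * w c) / x, ⟨fun c => ?_, ?_⟩, t, div_pos (sub_pos.2 hxq) hw,
    fun c => ?_⟩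
  · refine div_nonneg (sub_nonneg.2 ?_) hx.le
    rw [div_mul_eq_mul_div]
    exact div_le_one_of_le₀ (hle c) hw.le
  · rw [← Finset.sum_div, Finset.sum_sub_distrib, ← Finset.mul_sum, div_mul_cancel₀ _ hw.ne']
    simp [hx.ne']
  · field_simp
    ring

theorem isProbDist_pointMass (b : Fin q) : IsProbDist (pointMass b) :=
  ⟨fun c => by unfold pointMass; positivity, by simp [pointMass]⟩

theorem absenceProb_of_dim_zero {μ : (Fin 0 → Fin q) → ℝ} (hμ : IsProbDist μ) (c : Fin q) :
    absenceProb μ c = 1 := by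
  simpa [absenceProb, colorCount] using hμ.2

theorem half_le_of_one_sub_div_le (hd : 2 * q ≤ d) (hβd : 1 - (q : ℝ) / (d + 1) ≤ β) :
    1 / 2 ≤ β := by
  have hd' : 2 * (q : ℝ) ≤ d := by exact_mod_cast hd
  have : (q : ℝ) / (d + 1) ≤ 1 / 2 := by
    rw [div_le_iff₀ (by positivity)]
    linarith
  linarith

theorem stmt6_general (hq : 2 ≤ q) (hβ : 1 / 2 ≤ β) (hβ1 : β ≤ 1)
    (hβd : 1 - (q : ℝ) / (d + 1) ≤ β) (hμ : IsProbDist μ)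
    (habs : ∀ c, absenceProb μ c ≤ 1 / 4) :
    ∃ p : Fin q → ℝ, IsProbDist p ∧
      ∀ c, Ffun (pottsA q β) μ c = Ffun (pottsA q β) (prodMeasure fun _ : Fin d => p) c := by
  have c₀ : Fin q := ⟨0, by lia⟩
  have : Nonempty (Fin q) := ⟨c₀⟩
  obtain rfl | hβ1 := hβ1.eq_or_lt
  · refine ⟨pointMass c₀, isProbDist_pointMass c₀, Ffun_eq_of_Gfun_eq_mul one_ne_zero fun c => ?_⟩
    simp [Gfun_pottsA_prodMeasure_const (isProbDist_pointMass c₀).2, Gfun_pottsA, hμ.2]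
  have hd : d ≠ 0 := by
    rintro rfl
    linarith [habs c₀, absenceProb_of_dim_zero hμ c₀]
  have hq' : (2 : ℝ) ≤ q := by exact_mod_cast hq
  have G_pos := Gfun_pottsA_pos (show 0 < β by linarith) hμ
  obtain ⟨p, hp, t, ht, one_sub_eq⟩ := exists_isProbDist_one_sub_mul_eq_mul
    (sub_pos.2 hβ1) (by linarith)
    (Finset.sum_pos (fun b _ => Real.rpow_pos_of_pos (G_pos b) _) Finset.univ_nonempty)
    fun c => sub_mul_Gfun_rpow_inv_le_sum hq hd hβ hβ1.le hβd hμ (habs c)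
  refine ⟨p, hp, Ffun_eq_of_Gfun_eq_mul (pow_pos ht d).ne' fun c => ?_⟩
  rw [Gfun_pottsA_prodMeasure_const hp.2, one_sub_eq, mul_pow,
    Real.rpow_inv_natCast_pow (G_pos c).le hd]

end Potts

/-- Theorem: large convex bulk for the antiferromagnetic Potts model.
For `q ≥ 2`, `d ≥ 2q`, `max{0, 1 - q/(d+1)} ≤ β ≤ 1`, `0 < ε ≤ 1/4` and
`γ* = min{1 - √β + ε, 1/10}`: if `μ` is a probability distribution on `[q]^d`
such that for every color `c`,
`Pr_{τ∼μ}[#{i : τ i = c} ≤ γ*·d/q] ≤ ε`, then there is a product probability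
measure `ν` on `[q]^d` with `F_A(μ) = F_A(ν)`. -/
theorem stmt6 (q d : ℕ) (hq : 2 ≤ q) (hd : 2 * q ≤ d) (β ε : ℝ)
    (hβlo : max 0 (1 - (q:ℝ) / ((d:ℝ) + 1)) ≤ β) (hβhi : β ≤ 1)
    (hε0 : 0 < ε) (hε : ε ≤ 1/4)
    (μ : (Fin d → Fin q) → ℝ) (hμ : IsProbDist μ)
    (htail : ∀ c : Fin q,
      (∑ τ : Fin d → Fin q,
        if ((Finset.univ.filter (fun i => τ i = c)).card : ℝ) ≤
            min (1 - Real.sqrt β + ε) (1/10) * (d:ℝ) / (q:ℝ)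
        then μ τ else 0) ≤ ε) :
    ∃ ν : Fin d → Fin q → ℝ, (∀ i, IsProbDist (ν i)) ∧
      ∀ c, Ffun (pottsA q β) μ c = Ffun (pottsA q β) (prodMeasure ν) c := by
  have hβd : 1 - (q : ℝ) / (d + 1) ≤ β := (le_max_right _ _).trans hβlo
  have threshold_nonneg : 0 ≤ min (1 - √β + ε) (1 / 10) * (d : ℝ) / q := by
    have : √β ≤ 1 := Real.sqrt_le_one.2 hβhi
    have : 0 ≤ min (1 - √β + ε) (1 / 10) := le_min (by linarith) (by norm_num)
    positivity
  obtain ⟨p, hp, hF⟩ := stmt6_general hq (half_le_of_one_sub_div_le hd hβd) hβhi hβd hμ fun c =>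
    ((absenceProb_le_sum_ite_colorCount_le hμ.1 threshold_nonneg c).trans (htail c)).trans hε
  exact ⟨fun _ => p, fun _ => hp, hF⟩
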